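/- Let n ≥ 2 be an integer and φ ∈ ℝ, and set a = cos(2π/n), b = sin(2π/n). Then each of the three complex numbers a + i·b, a − i·b, and −a + i·b is an eigenvalue of the matrix 𝔅ₙ,φ, i.e. for each of these values λ there exists a nonzero vector v ∈ ℂ⁴ with 𝔅ₙ,φ · v = λ·v. -/

import Mathlib

open Matrix Complex

/-- The q-deformed gate 𝔅ₙ,φ. -/
noncomputable def Bnφ (n : ℕ) (φ : ℝ) : Matrix (Fin 4) (Fin 4) ℂ :=
  let a : ℂ := (Real.cos (2 * Real.pi / n) : ℂ)
  let b : ℂ := (Real.sin (2 * Real.pi / n) : ℂ)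
  !![a, 0, 0, -Complex.I * b * Complex.exp (Complex.I * φ);
     0, Complex.I * b, a, 0;
     0, a, Complex.I * b, 0;
     -Complex.I * b * Complex.exp (-(Complex.I * φ)), 0, 0, a]

/-!
The gate preserves parity, so it splits into a block on `00, 11` and a block on `01, 10`. Both
have the form `!![c, y * z ^ 2; y, c]`, for which `![z, 1]` is an eigenvector with eigenvalue
`c + y * z`: take `z = exp (I * φ)` on the first block, where `y * z = -I * b`, and `z = ±1` on the
second.
-/

/-- The X-shaped matrix acting as `A` on the coordinates `0, 3` (the parity-even basis vectors
`00, 11`) and as `B` on the coordinates `1, 2` (the parity-odd ones `01, 10`). -/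
def xMatrix {R : Type*} [Zero R] (A B : Matrix (Fin 2) (Fin 2) R) : Matrix (Fin 4) (Fin 4) R :=
  !![A 0 0, 0, 0, A 0 1;
     0, B 0 0, B 0 1, 0;
     0, B 1 0, B 1 1, 0;
     A 1 0, 0, 0, A 1 1]

section XMatrix

variable {R : Type*} [NonUnitalNonAssocSemiring R] {A B : Matrix (Fin 2) (Fin 2) R} {μ : R}

theorem xMatrix_mulVec (A B : Matrix (Fin 2) (Fin 2) R) (v w : Fin 2 → R) :
    xMatrix A B *ᵥ ![v 0, w 0, w 1, v 1] =
      ![(A *ᵥ v) 0, (B *ᵥ w) 0, (B *ᵥ w) 1, (A *ᵥ v) 1] := by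
  ext i
  fin_cases i <;> simp [xMatrix, mulVec, dotProduct, Fin.sum_univ_succ]

theorem exists_eigenvector_xMatrix_of_outer (h : ∃ v : Fin 2 → R, v ≠ 0 ∧ A *ᵥ v = μ • v) :
    ∃ v : Fin 4 → R, v ≠ 0 ∧ xMatrix A B *ᵥ v = μ • v := by
  obtain ⟨v, hv, hAv⟩ := h
  refine ⟨![v 0, 0, 0, v 1], fun h0 ↦ hv ?_, ?_⟩
  · ext i
    fin_cases i
    exacts [congrFun h0 0, congrFun h0 3]
  · simpa [hAv] using xMatrix_mulVec A B v 0

theorem exists_eigenvector_xMatrix_of_inner (h : ∃ v : Fin 2 → R, v ≠ 0 ∧ B *ᵥ v = μ • v) :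
    ∃ v : Fin 4 → R, v ≠ 0 ∧ xMatrix A B *ᵥ v = μ • v := by
  obtain ⟨v, hv, hBv⟩ := h
  refine ⟨![0, v 0, v 1, 0], fun h0 ↦ hv ?_, ?_⟩
  · ext i
    fin_cases i
    exacts [congrFun h0 1, congrFun h0 2]
  · simpa [hBv] using xMatrix_mulVec A B 0 v

end XMatrix

theorem exists_eigenvector_fin_two_of_eq_mul_sq {R : Type*} [CommSemiring R] [Nontrivial R]
    {c x y z μ : R} (hx : x = y * z ^ 2) (hμ : μ = c + y * z) :
    ∃ v : Fin 2 → R, v ≠ 0 ∧ !![c, x; y, c] *ᵥ v = μ • v := by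
  refine ⟨![z, 1], fun h0 ↦ one_ne_zero (congrFun h0 1), ?_⟩
  subst hx hμ
  ext i
  fin_cases i <;> simp <;> ring

theorem Bnφ_eq_xMatrix (n : ℕ) (φ : ℝ) :
    Bnφ n φ =
      xMatrix
        !![(Real.cos (2 * Real.pi / n) : ℂ), -I * Real.sin (2 * Real.pi / n) * exp (I * φ);
           -I * Real.sin (2 * Real.pi / n) * exp (-(I * φ)), Real.cos (2 * Real.pi / n)]
        !![I * Real.sin (2 * Real.pi / n), (Real.cos (2 * Real.pi / n) : ℂ);
           Real.cos (2 * Real.pi / n), I * Real.sin (2 * Real.pi / n)] :=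
  rfl

/-- The numbers a + i·b, a − i·b and −a + i·b, with a = cos(2π/n), b = sin(2π/n),
are eigenvalues of 𝔅ₙ,φ. -/
theorem Bnφ_eigenvalues (n : ℕ) (hn : 2 ≤ n) (φ : ℝ) :
    (∃ v : Fin 4 → ℂ, v ≠ 0 ∧ (Bnφ n φ).mulVec v =
      ((Real.cos (2 * Real.pi / n) : ℂ) + Complex.I * (Real.sin (2 * Real.pi / n) : ℂ)) • v) ∧
    (∃ v : Fin 4 → ℂ, v ≠ 0 ∧ (Bnφ n φ).mulVec v =
      ((Real.cos (2 * Real.pi / n) : ℂ) - Complex.I * (Real.sin (2 * Real.pi / n) : ℂ)) • v) ∧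
    (∃ v : Fin 4 → ℂ, v ≠ 0 ∧ (Bnφ n φ).mulVec v =
      (-(Real.cos (2 * Real.pi / n) : ℂ) + Complex.I * (Real.sin (2 * Real.pi / n) : ℂ)) • v) := by
  rw [Bnφ_eq_xMatrix]
  set a : ℂ := (Real.cos (2 * Real.pi / n) : ℂ)
  set b : ℂ := (Real.sin (2 * Real.pi / n) : ℂ)
  have phase_cancel : -I * b * exp (-(I * φ)) * exp (I * φ) = -I * b := by
    rw [exp_neg, inv_mul_cancel_right₀ (exp_ne_zero _)]
  refine ⟨exists_eigenvector_xMatrix_of_inner ?_, exists_eigenvector_xMatrix_of_outer ?_,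
    exists_eigenvector_xMatrix_of_inner ?_⟩
  · exact exists_eigenvector_fin_two_of_eq_mul_sq (z := 1) (by ring) (by ring)
  · refine exists_eigenvector_fin_two_of_eq_mul_sq (z := exp (I * φ)) ?_ ?_
    · rw [sq, ← mul_assoc, phase_cancel]
    · rw [phase_cancel, neg_mul, sub_eq_add_neg]
  · exact exists_eigenvector_fin_two_of_eq_mul_sq (z := -1) (by ring) (by ring)
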